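/- Let M ≥ 3 be an integer divisible by 3, set c = 2/3 and k = M/3, let δ ∈ [0, 1/6], and for each m ∈ {0,…,M} define u_F(m) = (1/2+δ)·[(1−c)m + max(0, M−k−m)] + (1/2−δ)·(1−c)m and u_G(m) = (1/2−δ)·[(1−c)m + max(0, M−k−m)] + (1/2+δ)·(1−c)m. Then: (i) max_{0 ≤ m' ≤ M} u_F(m') = u_F(0) = (1/2+δ)·(2M/3); (ii) max_{0 ≤ m' ≤ M} u_G(m') = u_G(M) = M/3; and (iii) for every m ∈ {0,…,M}: ( u_F(0) − u_F(m) ) + ( u_G(M) − u_G(m) ) ≥ (2/3)·M·δ. -/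

import Mathlib

/-!
If the sparse competing bid vector has probability `r` with `r * (M - k) = (1 - c) * M`, then
bidding nowhere and bidding everywhere are equally good. By convexity of the utility in the number
of positive bids, no intermediate number does better. Raising `r` by `δ` makes `0` optimal and
lowering it makes `M` optimal, while the two perturbed utilities still average to the balanced
one; hence no single choice of `m` can avoid losing `δ * (M - k)` in total.
-/

open Set

section Definition

variable {R : Type*} [CommRing R] [LinearOrder R]

/-- The expected utility of bidding `c` on `m` of `M` units of value `1` and `0` on the others, in
a pay-as-bid auction with ties won by the bidder. With probability `p` only `k` of the competing
bids are `c` and the rest are `0`, so that `M - k - m` further units (if positive) are won for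
free; otherwise all competing bids are `c`. The counts `m`, `k`, `M` are taken in `R`, so the
subtraction is not truncated. -/
def expectedUtility (c M k p m : R) : R :=
  p * ((1 - c) * m + max 0 (M - k - m)) + (1 - p) * ((1 - c) * m)

variable {c M k p r δ m : R}

lemma expectedUtility_eq :
    expectedUtility c M k p m = (1 - c) * m + p * max 0 (M - k - m) := by
  rw [expectedUtility]
  ring

lemma expectedUtility_add_add_expectedUtility_sub :
    expectedUtility c M k (r + δ) m + expectedUtility c M k (r - δ) m =
      2 * expectedUtility c M k r m := by
  simp only [expectedUtility_eq]
  ring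

variable [IsOrderedAddMonoid R]

lemma expectedUtility_zero (hk : k ≤ M) : expectedUtility c M k p 0 = p * (M - k) := by
  simp [expectedUtility_eq, hk]

lemma expectedUtility_self (hk : 0 ≤ k) : expectedUtility c M k p M = (1 - c) * M := by
  simp [expectedUtility_eq, hk]

end Definition

section Optimality

variable {𝕜 : Type*} [Field 𝕜] [LinearOrder 𝕜] [IsStrictOrderedRing 𝕜] {c M k p r δ m : 𝕜}

lemma convexOn_expectedUtility (hp : 0 ≤ p) : ConvexOn 𝕜 univ (expectedUtility c M k p) := by
  have hlin : ConvexOn 𝕜 univ fun m : 𝕜 ↦ (1 - c) * m :=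
    (LinearMap.mulLeft 𝕜 (1 - c)).convexOn convex_univ
  have hfree : ConvexOn 𝕜 univ fun m : 𝕜 ↦ max 0 (M - k - m) :=
    (convexOn_const 0 convex_univ).sup
      ((convexOn_const (M - k) convex_univ).sub (concaveOn_id convex_univ))
  exact (hlin.add (hfree.smul hp)).congr fun _ _ ↦ expectedUtility_eq.symm

lemma expectedUtility_le_max (hk : k ∈ Icc 0 M) (hp : 0 ≤ p) (hm : m ∈ Icc 0 M) :
    expectedUtility c M k p m ≤ max (p * (M - k)) ((1 - c) * M) := by
  have hconv := (convexOn_expectedUtility (c := c) (M := M) (k := k) hp).le_max_of_mem_Icc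
    (mem_univ 0) (mem_univ M) hm
  rwa [expectedUtility_zero hk.2, expectedUtility_self hk.1] at hconv

lemma isMaxOn_expectedUtility_zero (hk : k ∈ Icc 0 M) (hp : 0 ≤ p)
    (hle : (1 - c) * M ≤ p * (M - k)) : IsMaxOn (expectedUtility c M k p) (Icc 0 M) 0 :=
  isMaxOn_iff.2 fun _ hm ↦ (expectedUtility_le_max hk hp hm).trans_eq <| by
    rw [max_eq_left hle, expectedUtility_zero hk.2]

lemma isMaxOn_expectedUtility_self (hk : k ∈ Icc 0 M) (hp : 0 ≤ p)
    (hle : p * (M - k) ≤ (1 - c) * M) : IsMaxOn (expectedUtility c M k p) (Icc 0 M) M :=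
  isMaxOn_iff.2 fun _ hm ↦ (expectedUtility_le_max hk hp hm).trans_eq <| by
    rw [max_eq_right hle, expectedUtility_self hk.1]

lemma mul_sub_le_regret_add_regret (hk : k ∈ Icc 0 M) (hr : 0 ≤ r)
    (hbal : r * (M - k) = (1 - c) * M) (hm : m ∈ Icc 0 M) :
    δ * (M - k) ≤
      (expectedUtility c M k (r + δ) 0 - expectedUtility c M k (r + δ) m) +
        (expectedUtility c M k (r - δ) M - expectedUtility c M k (r - δ) m) := by
  have hm_le : expectedUtility c M k r m ≤ (1 - c) * M := by
    simpa only [hbal, max_self] using expectedUtility_le_max (c := c) hk hr hm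
  have havg := expectedUtility_add_add_expectedUtility_sub (c := c) (M := M) (k := k) (r := r)
    (δ := δ) (m := m)
  rw [expectedUtility_zero hk.2, expectedUtility_self hk.1]
  linarith

theorem stmt_13_general (hk : k ∈ Icc 0 M) (hbal : r * (M - k) = (1 - c) * M)
    (hδ : δ ∈ Icc 0 r) :
    (IsMaxOn (expectedUtility c M k (r + δ)) (Icc 0 M) 0 ∧
      expectedUtility c M k (r + δ) 0 = (r + δ) * (M - k)) ∧
    (IsMaxOn (expectedUtility c M k (r - δ)) (Icc 0 M) M ∧
      expectedUtility c M k (r - δ) M = (1 - c) * M) ∧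
    ∀ m ∈ Icc 0 M,
      δ * (M - k) ≤
        (expectedUtility c M k (r + δ) 0 - expectedUtility c M k (r + δ) m) +
          (expectedUtility c M k (r - δ) M - expectedUtility c M k (r - δ) m) := by
  have hr : 0 ≤ r := hδ.1.trans hδ.2
  have hgap : 0 ≤ δ * (M - k) := mul_nonneg hδ.1 (sub_nonneg.2 hk.2)
  refine ⟨⟨isMaxOn_expectedUtility_zero hk (add_nonneg hr hδ.1) ?_, expectedUtility_zero hk.2⟩,
    ⟨isMaxOn_expectedUtility_self hk (sub_nonneg.2 hδ.2) ?_, expectedUtility_self hk.1⟩,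
    fun _ hm ↦ mul_sub_le_regret_add_regret hk hr hbal hm⟩
  all_goals linarith

end Optimality

/-- **Core per-round regret computation in the Ω(M√T) lower bound**
(Theorem 6 of the paper). With `c = 2/3`, `k = M/3` and `δ ∈ [0, 1/6]`,
`u_F` is maximized at `m = 0` with value `(1/2+δ)·(2M/3)`, `u_G` is maximized
at `m = M` with value `M/3`, and for every `m ∈ {0,…,M}` the summed
suboptimality `(u_F(0) − u_F(m)) + (u_G(M) − u_G(m))` is at least
`(2/3)·M·δ`. -/
theorem stmt_13
    (M : ℕ) (hM : 3 ≤ M) (hdvd : 3 ∣ M)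
    (δ : ℝ) (hδ : δ ∈ Set.Icc (0:ℝ) (1/6))
    (uF uG : ℕ → ℝ)
    (huF : ∀ m : ℕ, uF m =
      (1/2 + δ) * ((1 - 2/3) * m + max 0 ((M : ℝ) - (M : ℝ)/3 - m))
        + (1/2 - δ) * ((1 - 2/3) * m))
    (huG : ∀ m : ℕ, uG m =
      (1/2 - δ) * ((1 - 2/3) * m + max 0 ((M : ℝ) - (M : ℝ)/3 - m))
        + (1/2 + δ) * ((1 - 2/3) * m)) :
    ((∀ m' ≤ M, uF m' ≤ uF 0) ∧ uF 0 = (1/2 + δ) * (2 * (M : ℝ) / 3)) ∧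
    ((∀ m' ≤ M, uG m' ≤ uG M) ∧ uG M = (M : ℝ) / 3) ∧
    (∀ m ≤ M, (uF 0 - uF m) + (uG M - uG m) ≥ (2/3) * M * δ) := by
  have hF (m : ℕ) : uF m = expectedUtility (2 / 3 : ℝ) M (M / 3) (1 / 2 + δ) m := by
    rw [huF, expectedUtility]
    ring
  have hG (m : ℕ) : uG m = expectedUtility (2 / 3 : ℝ) M (M / 3) (1 / 2 - δ) m := by
    rw [huG, expectedUtility]
    ring
  have hmem {m : ℕ} (hm : m ≤ M) : (m : ℝ) ∈ Icc (0 : ℝ) M :=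
    ⟨m.cast_nonneg, Nat.cast_le.2 hm⟩
  obtain ⟨⟨hmaxF, hF₀⟩, ⟨hmaxG, hGM⟩, hregret⟩ :=
    stmt_13_general (c := (2 / 3 : ℝ)) (M := M) (k := M / 3) (r := 1 / 2) (δ := δ)
      ⟨by positivity, div_le_self M.cast_nonneg (by norm_num)⟩ (by ring)
      ⟨hδ.1, by linarith [hδ.2]⟩
  simp only [hF, hG, Nat.cast_zero]
  exact ⟨⟨fun m hm ↦ hmaxF (hmem hm), hF₀.trans (by ring)⟩,
    ⟨fun m hm ↦ hmaxG (hmem hm), hGM.trans (by ring)⟩,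
    fun m hm ↦ (hregret m (hmem hm)).trans_eq' (by ring)⟩
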